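/- Fix p, q ∈ ℤ⁺ and s ∈ ℝ with 2s ∉ ℤ. Define φ_n(s;p,q) = [(s+3/2-p)_n (1-p)_n (s+1/2-q)_n (-q)_n] / [(p-s+1)_n (p+3/2)_n (q-s+1)_n (q+3/2)_n] and Φ_n(s;p,q) = [(n+p-s)(1+2p+2n)(n+q-s)(1+2q+2n) / ((s-p)(1+2p)(s-q)(1+2q))] · φ_n(s;p,q), and φ̃_n(s;p,q) = φ_n(s;p,q) · [C¹ + C²]/((s-p)(1+2p)(s-q)(1+2q)) where C¹ = (4n+3)(1+s-2p)(q-n)(1+2s+2n-2q) and C² = (4n+1)(s-2q)(1+2p+2n)(s-p-n). Then: (a) Φ_0 = 1; (b) Φ_n = 0 for all n ≥ p; (c) Φ_{n+1} - Φ_n = -φ̃_n for all n ∈ ℕ. -/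

import Mathlib

/-- The rising factorial (Pochhammer symbol) `(x)_n = x (x+1) ⋯ (x+n-1)`. -/
noncomputable def risingFactorial (x : ℝ) (n : ℕ) : ℝ :=
  ∏ k ∈ Finset.range n, (x + k)

/-- `φ_n(s;p,q)`. -/
noncomputable def varphi (s : ℝ) (p q : ℕ) (n : ℕ) : ℝ :=
  (risingFactorial (s + 3 / 2 - p) n * risingFactorial (1 - p) n *
      risingFactorial (s + 1 / 2 - q) n * risingFactorial (-q) n) /
    (risingFactorial ((p : ℝ) - s + 1) n * risingFactorial ((p : ℝ) + 3 / 2) n *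
      risingFactorial ((q : ℝ) - s + 1) n * risingFactorial ((q : ℝ) + 3 / 2) n)

/-- `Φ_n(s;p,q)`. -/
noncomputable def Phi (s : ℝ) (p q : ℕ) (n : ℕ) : ℝ :=
  (((n : ℝ) + p - s) * (1 + 2 * p + 2 * n) * ((n : ℝ) + q - s) * (1 + 2 * q + 2 * n) /
      ((s - p) * (1 + 2 * p) * (s - q) * (1 + 2 * q))) * varphi s p q n

/-- `φ̃_n(s;p,q)` (denoted `ϕ_n` in the paper). -/
noncomputable def phiT (s : ℝ) (p q : ℕ) (n : ℕ) : ℝ :=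
  varphi s p q n *
    ((4 * (n : ℝ) + 3) * (1 + s - 2 * p) * ((q : ℝ) - n) * (1 + 2 * s + 2 * n - 2 * q) +
      (4 * (n : ℝ) + 1) * (s - 2 * q) * (1 + 2 * p + 2 * n) * (s - p - n)) /
    ((s - p) * (1 + 2 * p) * (s - q) * (1 + 2 * q))

/-!
The ratio `φ_{n+1} / φ_n` equals `b(n) / a(n+1)` for two quartic polynomials `a` and `b`, and the
prefactor of `φ_n` in `Φ_n` is `a(n) / a(0)`. Hence `a(n+1) φ_{n+1} = b(n) φ_n`, which gives
`Φ_{n+1} - Φ_n = (b(n) - a(n)) φ_n / a(0)`, and `C¹ + C²` is `a(n) - b(n)`. The sequence vanishes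
from `n = p` on because the numerator of `φ_n` then contains the factor `(1 - p) + (p - 1)`.
-/

theorem risingFactorial_zero (x : ℝ) : risingFactorial x 0 = 1 :=
  Finset.prod_range_zero _

theorem risingFactorial_succ (x : ℝ) (n : ℕ) :
    risingFactorial x (n + 1) = risingFactorial x n * (x + n) :=
  Finset.prod_range_succ _ n

theorem risingFactorial_neg_natCast_of_lt {k n : ℕ} (hkn : k < n) :
    risingFactorial (-k) n = 0 :=
  Finset.prod_eq_zero (Finset.mem_range.2 hkn) (neg_add_cancel (k : ℝ))

/-- The polynomial `a` with `φ_{n+1} / φ_n = b(n) / a(n+1)`, scaled by `4` to have integer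
coefficients; the prefactor of `φ_n` in `Φ_n` is `a(n) / a(0)`. -/
def varphiRatioDen (s p q t : ℝ) : ℝ :=
  (t + p - s) * (1 + 2 * p + 2 * t) * (t + q - s) * (1 + 2 * q + 2 * t)

/-- The polynomial `b` with `φ_{n+1} / φ_n = b(n) / a(n+1)`, where `a` is `varphiRatioDen` and `b`
is scaled by the same factor `4`. -/
def varphiRatioNum (s p q t : ℝ) : ℝ :=
  (2 * s + 3 - 2 * p + 2 * t) * (1 - p + t) * (2 * s + 1 - 2 * q + 2 * t) * (-q + t)

theorem varphiRatioDen_sub_varphiRatioNum (s p q t : ℝ) :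
    varphiRatioDen s p q t - varphiRatioNum s p q t =
      (4 * t + 3) * (1 + s - 2 * p) * (q - t) * (1 + 2 * s + 2 * t - 2 * q) +
        (4 * t + 1) * (s - 2 * q) * (1 + 2 * p + 2 * t) * (s - p - t) := by
  unfold varphiRatioDen varphiRatioNum
  ring

theorem varphiRatioDen_ne_zero {s t : ℝ} {p q : ℕ} (ht : 0 ≤ t) (hp : s ≠ p + t)
    (hq : s ≠ q + t) : varphiRatioDen s p q t ≠ 0 := by
  have hp' : t + p - s ≠ 0 := fun h => hp (by linarith)
  have hq' : t + q - s ≠ 0 := fun h => hq (by linarith)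
  unfold varphiRatioDen
  positivity

theorem varphi_zero (s : ℝ) (p q : ℕ) : varphi s p q 0 = 1 := by
  simp [varphi, risingFactorial_zero]

theorem varphi_succ (s : ℝ) (p q n : ℕ) :
    varphi s p q (n + 1) =
      varphi s p q n * (varphiRatioNum s p q n / varphiRatioDen s p q (n + 1)) := by
  have num_eq : varphiRatioNum s p q n =
      4 * ((s + 3 / 2 - p + n) * (1 - p + n) * (s + 1 / 2 - q + n) * (-q + n)) := by
    rw [varphiRatioNum]
    ring
  have den_eq : varphiRatioDen s p q (n + 1) =
      4 * ((p - s + 1 + n) * (p + 3 / 2 + n) * (q - s + 1 + n) * (q + 3 / 2 + n)) := by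
    rw [varphiRatioDen]
    ring
  rw [num_eq, den_eq, mul_div_mul_left _ _ four_ne_zero]
  simp only [varphi, risingFactorial_succ]
  rw [div_mul_div_comm]
  congr 1 <;> ring

theorem varphi_eq_zero_of_le (s : ℝ) {p n : ℕ} (q : ℕ) (hp : 0 < p) (hpn : p ≤ n) :
    varphi s p q n = 0 := by
  have one_sub_eq : (1 - p : ℝ) = -(p - 1 : ℕ) := by
    rw [Nat.cast_pred hp, neg_sub]
  have risingFactorial_eq_zero : risingFactorial (1 - p) n = 0 := by
    rw [one_sub_eq, risingFactorial_neg_natCast_of_lt (by lia)]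
  simp [varphi, risingFactorial_eq_zero]

theorem Phi_eq_varphiRatioDen_mul_varphi_div (s : ℝ) (p q n : ℕ) :
    Phi s p q n = varphiRatioDen s p q n * varphi s p q n / varphiRatioDen s p q 0 := by
  rw [Phi, div_mul_eq_mul_div, varphiRatioDen, varphiRatioDen]
  congr 1
  ring

theorem phiT_eq_varphi_mul_sub_div (s : ℝ) (p q n : ℕ) :
    phiT s p q n =
      varphi s p q n * (varphiRatioDen s p q n - varphiRatioNum s p q n) /
        varphiRatioDen s p q 0 := by
  rw [phiT, varphiRatioDen_sub_varphiRatioNum, varphiRatioDen]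
  congr 1
  ring

theorem Phi_zero {s : ℝ} {p q : ℕ} (hp : s ≠ p) (hq : s ≠ q) : Phi s p q 0 = 1 := by
  have den_ne_zero : varphiRatioDen s p q 0 ≠ 0 :=
    varphiRatioDen_ne_zero le_rfl (by rwa [add_zero]) (by rwa [add_zero])
  rw [Phi_eq_varphiRatioDen_mul_varphi_div, varphi_zero, Nat.cast_zero, mul_one,
    div_self den_ne_zero]

theorem Phi_eq_zero_of_le (s : ℝ) {p n : ℕ} (q : ℕ) (hp : 0 < p) (hpn : p ≤ n) :
    Phi s p q n = 0 := by
  rw [Phi, varphi_eq_zero_of_le s q hp hpn, mul_zero]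

theorem Phi_succ_sub {s : ℝ} {p q n : ℕ} (hp : s ≠ p + (n + 1)) (hq : s ≠ q + (n + 1)) :
    Phi s p q (n + 1) - Phi s p q n = -phiT s p q n := by
  have varphi_recurrence : varphiRatioDen s p q (n + 1) * varphi s p q (n + 1) =
      varphiRatioNum s p q n * varphi s p q n := by
    have den_ne_zero := varphiRatioDen_ne_zero (by positivity) hp hq
    rw [varphi_succ, mul_left_comm, mul_div_cancel₀ _ den_ne_zero, mul_comm]
  rw [Phi_eq_varphiRatioDen_mul_varphi_div, Phi_eq_varphiRatioDen_mul_varphi_div,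
    phiT_eq_varphi_mul_sub_div, Nat.cast_succ, varphi_recurrence]
  ring

theorem Phi_telescoping_general {p : ℕ} (q : ℕ) (hp : 0 < p) {s : ℝ}
    (hsp : ∀ m : ℕ, s ≠ p + m) (hsq : ∀ m : ℕ, s ≠ q + m) :
    Phi s p q 0 = 1 ∧ (∀ n : ℕ, p ≤ n → Phi s p q n = 0) ∧
      (∀ n : ℕ, Phi s p q (n + 1) - Phi s p q n = -phiT s p q n) :=
  ⟨Phi_zero (by simpa using hsp 0) (by simpa using hsq 0),
    fun _ hpn => Phi_eq_zero_of_le s q hp hpn,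
    fun n => Phi_succ_sub (mod_cast hsp (n + 1)) (mod_cast hsq (n + 1))⟩

/-- Telescoping lemma: `Φ_0 = 1`, `Φ_n = 0` for `n ≥ p`, and `Φ_{n+1} - Φ_n = -φ̃_n`. -/
theorem Phi_telescoping (p q : ℕ) (hp : 0 < p) (hq : 0 < q)
    (s : ℝ) (hs : ∀ m : ℤ, 2 * s ≠ (m : ℝ)) :
    Phi s p q 0 = 1 ∧ (∀ n : ℕ, p ≤ n → Phi s p q n = 0) ∧
      (∀ n : ℕ, Phi s p q (n + 1) - Phi s p q n = -phiT s p q n) := by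
  have ne_natCast_add (a m : ℕ) : s ≠ a + m := fun h => hs (2 * (a + m)) (by push_cast; rw [h])
  exact Phi_telescoping_general q hp (ne_natCast_add p) (ne_natCast_add q)
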